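/- Let C be a regular, irreducible curve that is projective over a field k, with function field F = k(C), arithmetic genus t, and a k-rational point O. For every integer d ≥ 3t + 1, the tame symbol induces an isomorphism F_d / F_{d−1} ≅ ∐_{O ≠ P ∈ C_d} k(P)^*. -/

import Mathlib

open scoped TensorProduct

noncomputable section

/-- The set of Steinberg relations in `Fˣ ⊗_ℤ Fˣ` (written additively):
the elements `a ⊗ b` with `a + b = 1` in `F`. -/
def SteinbergSet (F : Type*) [Field F] :
    Set (TensorProduct ℤ (Additive Fˣ) (Additive Fˣ)) :=
  { x | ∃ a b : Fˣ, (a : F) + (b : F) = 1 ∧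
      x = Additive.ofMul a ⊗ₜ[ℤ] Additive.ofMul b }

/-- Milnor's `K₂` of a field, via Matsumoto's presentation. -/
abbrev K2 (F : Type*) [Field F] :=
  (TensorProduct ℤ (Additive Fˣ) (Additive Fˣ)) ⧸
    Submodule.span ℤ (SteinbergSet F)

/-- The symbol `{f, g}` in `K₂(F)`. -/
def symbol {F : Type*} [Field F] (f g : Fˣ) : K2 F :=
  Submodule.Quotient.mk (Additive.ofMul f ⊗ₜ[ℤ] Additive.ofMul g)

/-- The degree of a divisor `D` on the curve: `∑_P deg(P) · D(P)`,
where `deg P = [k(P) : k]`. -/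
def divDeg (k : Type*) [Field k] {Pt : Type*} (res : Pt → Type*)
    [∀ P, Field (res P)] [∀ P, Algebra k (res P)] (D : Pt →₀ ℤ) : ℤ :=
  ∑ᶠ P, (Module.finrank k (res P) : ℤ) * D P

/-- Axioms for a regular, irreducible curve `C`, projective over a field `k`, with
`H⁰(C, O_C) = k`, presented through: its function field `F = k(C)`, its set `Pt` of
closed points, the residue fields `res P = k(P)`, the normalized valuations `ord P`,
the evaluation maps `ev P` (evaluation at `P` of functions regular at `P`), the
Riemann-Roch spaces `L D = H⁰(C, O_C(D))`, and the arithmetic genus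
`t = dim_k H¹(C, O_C)`, characterized by the Riemann-Roch relations. -/
structure IsProjCurve (k F : Type*) [Field k] [Field F] [Algebra k F]
    {Pt : Type*} (res : Pt → Type*) [∀ P, Field (res P)] [∀ P, Algebra k (res P)]
    (ord : Pt → F → ℤ) (ev : ∀ P, F → res P)
    (L : (Pt →₀ ℤ) → Submodule k F) (t : ℕ) : Prop where
  finiteDimensional_res : ∀ P, FiniteDimensional k (res P)
  ord_mul : ∀ P (f g : F), f ≠ 0 → g ≠ 0 → ord P (f * g) = ord P f + ord P g
  ord_add : ∀ P (f g : F), f ≠ 0 → g ≠ 0 → f + g ≠ 0 →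
      min (ord P f) (ord P g) ≤ ord P (f + g)
  ord_algebraMap : ∀ P (c : k), c ≠ 0 → ord P (algebraMap k F c) = 0
  ord_uniformizer : ∀ P, ∃ f : F, f ≠ 0 ∧ ord P f = 1
  ord_separates : ∀ P Q, (∀ f : F, ord P f = ord Q f) → P = Q
  support_finite : ∀ f : F, f ≠ 0 → {P | ord P f ≠ 0}.Finite
  degree_formula : ∀ f : F, f ≠ 0 →
      ∑ᶠ P, (Module.finrank k (res P) : ℤ) * ord P f = 0
  ev_zero : ∀ P, ev P 0 = 0
  ev_one : ∀ P, ev P 1 = 1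
  ev_add : ∀ P (f g : F), f ≠ 0 → g ≠ 0 → 0 ≤ ord P f → 0 ≤ ord P g →
      ev P (f + g) = ev P f + ev P g
  ev_mul : ∀ P (f g : F), f ≠ 0 → g ≠ 0 → 0 ≤ ord P f → 0 ≤ ord P g →
      ev P (f * g) = ev P f * ev P g
  ev_algebraMap : ∀ P (c : k), ev P (algebraMap k F c) = algebraMap k (res P) c
  ev_eq_zero_iff : ∀ P (f : F), f ≠ 0 → 0 ≤ ord P f → (ev P f = 0 ↔ 0 < ord P f)
  ev_surjective : ∀ P (y : res P), ∃ f : F, f ≠ 0 ∧ 0 ≤ ord P f ∧ ev P f = y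
  mem_L : ∀ (D : Pt →₀ ℤ) (f : F), f ∈ L D ↔ (f ≠ 0 → ∀ P, 0 ≤ D P + ord P f)
  finiteDimensional_L : ∀ D, FiniteDimensional k (L D)
  global_sections : ∀ f : F, f ∈ L 0 ↔ ∃ c : k, algebraMap k F c = f
  rr_ineq : ∀ D : Pt →₀ ℤ,
      divDeg k res D + 1 - t ≤ (Module.finrank k (L D) : ℤ)
  rr_eq : ∀ D : Pt →₀ ℤ, 2 * (t : ℤ) - 2 < divDeg k res D →
      (Module.finrank k (L D) : ℤ) = divDeg k res D + 1 - t

/-- `T` is the tame symbol `K₂(F) → ∐_{P} k(P)^*`: it is determined by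
`T_P({f,g}) = (-1)^{ord_P(f)·ord_P(g)} (f^{ord_P(g)} / g^{ord_P(f)})(P)`. -/
def IsTameSymbol {F : Type*} [Field F] {Pt : Type*} {res : Pt → Type*}
    [∀ P, Field (res P)]
    (ord : Pt → F → ℤ) (ev : ∀ P, F → res P)
    (T : K2 F →+ Π₀ P : Pt, Additive ((res P)ˣ)) : Prop :=
  ∀ (f g : Fˣ) (P : Pt),
    ((Additive.toMul (T (symbol f g) P) : (res P)ˣ) : res P) =
      ev P (((-1 : Fˣ) ^ (ord P (f : F) * ord P (g : F)) *
        f ^ (ord P (g : F)) * g ^ (-ord P (f : F)) : Fˣ) : F)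

/-- `F_d`: the subgroup of `K₂(F)` generated by the symbols `{f, g}` with
`|(f)| ∪ |(g)| ⊆ C_{≤ d}`. -/
def Fsub (k : Type*) [Field k] {F : Type*} [Field F] {Pt : Type*} (res : Pt → Type*)
    [∀ P, Field (res P)] [∀ P, Algebra k (res P)]
    (ord : Pt → F → ℤ) (d : ℕ) : AddSubgroup (K2 F) :=
  AddSubgroup.closure
    { x | ∃ f g : Fˣ,
        (∀ P, ord P (f : F) ≠ 0 → Module.finrank k (res P) ≤ d) ∧
        (∀ P, ord P (g : F) ≠ 0 → Module.finrank k (res P) ≤ d) ∧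
        x = symbol f g }
section Symbols

variable {F : Type*} [Field F]

lemma symbol_mul_left (f g h : Fˣ) : symbol (f * g) h = symbol f h + symbol g h := by
  simp only [symbol, ofMul_mul, TensorProduct.add_tmul, Submodule.Quotient.mk_add]

lemma symbol_mul_right (f g h : Fˣ) : symbol f (g * h) = symbol f g + symbol f h := by
  simp only [symbol, ofMul_mul, TensorProduct.tmul_add, Submodule.Quotient.mk_add]

lemma symbol_one_left (g : Fˣ) : symbol 1 g = 0 := by
  simpa using symbol_mul_left 1 1 g

lemma symbol_one_right (f : Fˣ) : symbol f 1 = 0 := by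
  simpa using symbol_mul_right f 1 1

lemma symbol_inv_left (f g : Fˣ) : symbol f⁻¹ g = -symbol f g := by
  have h := symbol_mul_left f⁻¹ f g
  rw [inv_mul_cancel, symbol_one_left] at h
  exact eq_neg_of_add_eq_zero_left h.symm

lemma symbol_inv_right (f g : Fˣ) : symbol f g⁻¹ = -symbol f g := by
  have h := symbol_mul_right f g⁻¹ g
  rw [inv_mul_cancel, symbol_one_right] at h
  exact eq_neg_of_add_eq_zero_left h.symm

lemma symbol_eq_zero_of_add_eq_one {a b : Fˣ} (h : (a : F) + b = 1) : symbol a b = 0 :=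
  (Submodule.Quotient.mk_eq_zero _).2 (Submodule.subset_span ⟨a, b, h, rfl⟩)

lemma symbol_self_neg (a : Fˣ) : symbol a (-a) = 0 := by
  by_cases ha : a = 1
  · rw [ha, symbol_one_left]
  have ha' : (a : F) ≠ 1 := by simpa using ha
  have hb : (1 - a : F) ≠ 0 := sub_ne_zero.2 ha'.symm
  have hc : (1 - (a : F)⁻¹) ≠ 0 := sub_ne_zero.2 fun h => ha' (inv_eq_one.1 h.symm)
  have hneg : -a = Units.mk0 _ hb * (Units.mk0 _ hc)⁻¹ := by
    rw [eq_mul_inv_iff_mul_eq]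
    ext
    simp [mul_sub]
  have h₁ : symbol a (Units.mk0 _ hb) = 0 := symbol_eq_zero_of_add_eq_one (by simp)
  have h₂ : symbol a⁻¹ (Units.mk0 _ hc) = 0 := symbol_eq_zero_of_add_eq_one (by simp)
  rw [symbol_inv_left, neg_eq_zero] at h₂
  rw [hneg, symbol_mul_right, symbol_inv_right, h₁, h₂, neg_zero, add_zero]

lemma symbol_self (a : Fˣ) : symbol a a = symbol a (-1) := by
  have h := symbol_mul_right a (-1) (-a)
  rwa [neg_mul_neg, one_mul, symbol_self_neg, add_zero] at h

lemma symbol_swap (a b : Fˣ) : symbol b a = -symbol a b := by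
  have h := symbol_self_neg (a * b)
  rw [symbol_mul_left, ← neg_mul, symbol_mul_right, symbol_self_neg, zero_add, neg_mul, ← mul_neg,
    symbol_mul_right b, symbol_self_neg, add_zero] at h
  exact eq_neg_of_add_eq_zero_right h

end Symbols

section Degree

variable (k : Type*) [Field k] {Pt : Type*} (res : Pt → Type*)
  [∀ P, Field (res P)] [∀ P, Algebra k (res P)]

lemma divDeg_eq_sum (D : Pt →₀ ℤ) :
    divDeg k res D = D.sum fun P n => (Module.finrank k (res P) : ℤ) * n := by
  rw [divDeg, Finsupp.sum, finsum_eq_sum_of_support_subset]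
  intro P hP
  simp only [Function.mem_support, ne_eq, mul_eq_zero, not_or] at hP
  simpa using hP.2

lemma divDeg_add (D E : Pt →₀ ℤ) :
    divDeg k res (D + E) = divDeg k res D + divDeg k res E := by
  simp only [divDeg_eq_sum]
  exact Finsupp.sum_add_index' (by simp) (by intros; ring)

lemma divDeg_sub (D E : Pt →₀ ℤ) :
    divDeg k res (D - E) = divDeg k res D - divDeg k res E := by
  rw [eq_sub_iff_add_eq, ← divDeg_add, sub_add_cancel]

lemma divDeg_single (P : Pt) (n : ℤ) :
    divDeg k res (Finsupp.single P n) = Module.finrank k (res P) * n := by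
  rw [divDeg_eq_sum, Finsupp.sum_single_index (by simp)]

lemma divDeg_nonneg {D : Pt →₀ ℤ} (hD : 0 ≤ D) : 0 ≤ divDeg k res D :=
  finsum_nonneg fun P => mul_nonneg (by positivity) (hD P)

lemma divDeg_mono {D E : Pt →₀ ℤ} (h : D ≤ E) : divDeg k res D ≤ divDeg k res E := by
  have := divDeg_nonneg k res (sub_nonneg.2 h)
  rw [divDeg_sub] at this
  linarith

lemma finrank_le_divDeg {D : Pt →₀ ℤ} (hD : 0 ≤ D)
    {P : Pt} (hP : D P ≠ 0) : (Module.finrank k (res P) : ℤ) ≤ divDeg k res D := by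
  have h1 : 1 ≤ D P := Int.add_one_le_iff.2 (lt_of_le_of_ne (hD P) hP.symm)
  have h : Finsupp.single P 1 ≤ D := by
    classical
    intro Q
    rw [Finsupp.single_apply]
    split_ifs with hQ
    · exact hQ ▸ h1
    · exact hD Q
  simpa [divDeg_single] using divDeg_mono k res h

end Degree

lemma Finsupp.mem_addSubgroup_of_single_mem {Pt : Type*} (M : AddSubgroup (Pt →₀ ℤ))
    (D : Pt →₀ ℤ) (h : ∀ Q, D Q ≠ 0 → Finsupp.single Q 1 ∈ M) : D ∈ M := by
  rw [← Finsupp.sum_single D]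
  refine AddSubgroup.sum_mem _ fun Q hQ => ?_
  have := M.zsmul_mem (h Q (by simpa using hQ)) (D Q)
  simpa using this

namespace IsProjCurve

open Module

variable {k F : Type*} [Field k] [Field F] [Algebra k F]
  {Pt : Type*} {res : Pt → Type*} [∀ P, Field (res P)] [∀ P, Algebra k (res P)]
  {ord : Pt → F → ℤ} {ev : ∀ P, F → res P}
  {L : (Pt →₀ ℤ) → Submodule k F} {t : ℕ}

lemma ord_one (hC : IsProjCurve k F res ord ev L t) (P : Pt) : ord P 1 = 0 := by
  simpa using hC.ord_mul P 1 1 one_ne_zero one_ne_zero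

/-- The divisor of a nonzero rational function. -/
def divisor (hC : IsProjCurve k F res ord ev L t) (u : Fˣ) : Pt →₀ ℤ :=
  Finsupp.ofSupportFinite (fun P => ord P u) (hC.support_finite u u.ne_zero)

@[simp]
lemma divisor_apply (hC : IsProjCurve k F res ord ev L t) (u : Fˣ) (P : Pt) :
    hC.divisor u P = ord P u := rfl

lemma divisor_mul (hC : IsProjCurve k F res ord ev L t) (u v : Fˣ) :
    hC.divisor (u * v) = hC.divisor u + hC.divisor v := by
  ext P
  simpa using hC.ord_mul P u v u.ne_zero v.ne_zero

lemma divisor_one (hC : IsProjCurve k F res ord ev L t) : hC.divisor 1 = 0 := by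
  ext P
  simpa using hC.ord_one P

lemma divisor_inv (hC : IsProjCurve k F res ord ev L t) (u : Fˣ) :
    hC.divisor u⁻¹ = -hC.divisor u := by
  rw [eq_neg_iff_add_eq_zero, ← divisor_mul, inv_mul_cancel, divisor_one]

lemma divisor_div (hC : IsProjCurve k F res ord ev L t) (u v : Fˣ) :
    hC.divisor (u / v) = hC.divisor u - hC.divisor v := by
  rw [div_eq_mul_inv, divisor_mul, divisor_inv, sub_eq_add_neg]

lemma divisor_neg_one (hC : IsProjCurve k F res ord ev L t) : hC.divisor (-1) = 0 := by
  ext P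
  simpa using hC.ord_algebraMap P (-1) (by simp)

lemma divDeg_divisor (hC : IsProjCurve k F res ord ev L t) (u : Fˣ) :
    divDeg k res (hC.divisor u) = 0 :=
  hC.degree_formula u u.ne_zero

lemma coe_mem_L (hC : IsProjCurve k F res ord ev L t) {D : Pt →₀ ℤ} {u : Fˣ} :
    (u : F) ∈ L D ↔ 0 ≤ D + hC.divisor u := by
  rw [hC.mem_L, Finsupp.le_def]
  simp

lemma finrank_res_pos (hC : IsProjCurve k F res ord ev L t) (P : Pt) :
    0 < finrank k (res P) :=
  have := hC.finiteDimensional_res P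
  finrank_pos

lemma exists_mem_L (hC : IsProjCurve k F res ord ev L t) {D : Pt →₀ ℤ}
    (hD : (t : ℤ) ≤ divDeg k res D) : ∃ u : Fˣ, (u : F) ∈ L D := by
  have h := hC.rr_ineq D
  have hpos : 0 < finrank k (L D) := by omega
  have := nontrivial_of_finrank_pos hpos
  obtain ⟨f, hf⟩ := exists_ne (0 : L D)
  exact ⟨Units.mk0 f (by simpa using hf), f.2⟩

section BasePoint

variable {O : Pt}

/-- The functions whose divisor is supported on `O` and on points of degree at most `n`. -/
def supportedUnits (hC : IsProjCurve k F res ord ev L t) (O : Pt) (n : ℕ) : Subgroup Fˣ where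
  carrier := {u | ∀ Q ≠ O, hC.divisor u Q ≠ 0 → finrank k (res Q) ≤ n}
  one_mem' Q _ h := by simp [divisor_one] at h
  mul_mem' {u v} hu hv Q hQ h := by
    by_contra hn
    refine h ?_
    rw [divisor_mul, Finsupp.add_apply, not_ne_iff.1 fun h => hn (hu Q hQ h),
      not_ne_iff.1 fun h => hn (hv Q hQ h), add_zero]
  inv_mem' {u} hu Q hQ h := hu Q hQ (by simpa [divisor_inv] using h)

lemma neg_one_mem_supportedUnits (hC : IsProjCurve k F res ord ev L t) (n : ℕ) :
    -1 ∈ hC.supportedUnits O n := fun Q _ h => by simp [divisor_neg_one] at h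

lemma ord_eq_zero_of_mem_supportedUnits (hC : IsProjCurve k F res ord ev L t) {n : ℕ} {u : Fˣ}
    (hu : u ∈ hC.supportedUnits O n) {P : Pt} (hPO : P ≠ O) (hP : n < finrank k (res P)) :
    ord P (u : F) = 0 := by
  by_contra h
  exact absurd (hu P hPO h) (not_le.2 hP)

lemma divDeg_add_divisor (hC : IsProjCurve k F res ord ev L t) (hO : finrank k (res O) = 1)
    (m : ℤ) (u : Fˣ) : divDeg k res (Finsupp.single O m + hC.divisor u) = m := by
  rw [divDeg_add, divDeg_single, divDeg_divisor, hO]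
  simp

lemma finrank_le_of_mem_L (hC : IsProjCurve k F res ord ev L t) (hO : finrank k (res O) = 1)
    {m : ℤ} {u : Fˣ} (hu : (u : F) ∈ L (Finsupp.single O m)) {Q : Pt} (hQ : Q ≠ O)
    (h : ord Q (u : F) ≠ 0) : (finrank k (res Q) : ℤ) ≤ m := by
  rw [← hC.divDeg_add_divisor hO m u]
  exact finrank_le_divDeg k res (hC.coe_mem_L.1 hu) (by simpa [hQ.symm] using h)

lemma mem_supportedUnits_of_mem_L (hC : IsProjCurve k F res ord ev L t)
    (hO : finrank k (res O) = 1) {m : ℤ} {n : ℕ} (hmn : m ≤ n) {u : Fˣ}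
    (hu : (u : F) ∈ L (Finsupp.single O m)) : u ∈ hC.supportedUnits O n := fun Q hQ h => by
  have := hC.finrank_le_of_mem_L hO hu hQ h
  omega

lemma ord_nonneg_of_mem_L (hC : IsProjCurve k F res ord ev L t)
    {m : ℤ} {u : Fˣ} (hu : (u : F) ∈ L (Finsupp.single O m)) {Q : Pt} (hQ : Q ≠ O) :
    0 ≤ ord Q (u : F) := by
  simpa [hQ.symm] using hC.coe_mem_L.1 hu Q

/-- A function in `L(mO)` vanishing at `P` has all its other zeros of degree at most `m - deg P`,
and if `m < 2 deg P` then the zero at `P` is simple. -/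
lemma finrank_add_finrank_le_of_mem_L (hC : IsProjCurve k F res ord ev L t)
    (hO : finrank k (res O) = 1) {m : ℤ} {u : Fˣ} (hu : (u : F) ∈ L (Finsupp.single O m))
    {P : Pt} (hP : P ≠ O) (h0 : ord P (u : F) ≠ 0) {Q : Pt} (hQ : Q ≠ O)
    (h : Finsupp.single P 1 Q ≠ ord Q (u : F)) :
    (finrank k (res P) + finrank k (res Q) : ℤ) ≤ m := by
  classical
  have hpos := hC.coe_mem_L.1 hu
  have hS : 0 ≤ Finsupp.single O m + hC.divisor u - Finsupp.single P 1 := by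
    intro R
    have hR := hpos R
    by_cases hRP : R = P
    · subst hRP
      have := lt_of_le_of_ne (hC.ord_nonneg_of_mem_L hu hP) h0.symm
      simp [hP.symm]
      omega
    · simpa [Finsupp.single_apply, Ne.symm hRP] using hR
  have := finrank_le_divDeg k res hS (P := Q) (by
    simp only [Finsupp.sub_apply, Finsupp.add_apply, Finsupp.single_eq_of_ne hQ, divisor_apply]
    omega)
  rw [divDeg_sub, hC.divDeg_add_divisor hO, divDeg_single] at this
  omega

lemma mul_mem_L (hC : IsProjCurve k F res ord ev L t) {D E : Pt →₀ ℤ} {f g : F}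
    (hf : f ∈ L D) (hg : g ∈ L E) : f * g ∈ L (D + E) := by
  rw [hC.mem_L] at *
  intro h P
  have hf0 := left_ne_zero_of_mul h
  have hg0 := right_ne_zero_of_mul h
  have := hf hf0 P
  have := hg hg0 P
  rw [hC.ord_mul P f g hf0 hg0, Finsupp.add_apply]
  omega

lemma mul_mem_L_single (hC : IsProjCurve k F res ord ev L t) {l m : ℤ} {f g : F}
    (hf : f ∈ L (Finsupp.single O l)) (hg : g ∈ L (Finsupp.single O m)) :
    f * g ∈ L (Finsupp.single O (l + m)) := by
  rw [Finsupp.single_add]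
  exact hC.mul_mem_L hf hg

lemma L_mono (hC : IsProjCurve k F res ord ev L t) {D E : Pt →₀ ℤ} (h : D ≤ E) :
    L D ≤ L E := fun f hf => by
  rw [hC.mem_L] at *
  intro h0 P
  have := hf h0 P
  have := h P
  omega

lemma L_single_mono (hC : IsProjCurve k F res ord ev L t) {m n : ℤ} (h : m ≤ n) :
    L (Finsupp.single O m) ≤ L (Finsupp.single O n) :=
  hC.L_mono (Finsupp.single_mono h)

/-- An effective divisor `R` is, up to a multiple of `O`, linearly equivalent to `-R'` for some
effective divisor `R'` of degree `t`. -/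
lemma exists_divisor_eq_add (hC : IsProjCurve k F res ord ev L t) (hO : finrank k (res O) = 1)
    (R : Pt →₀ ℤ) :
    ∃ (g : Fˣ) (R' : Pt →₀ ℤ), 0 ≤ R' ∧ divDeg k res R' = t ∧
      hC.divisor g = R + R' - Finsupp.single O (divDeg k res R + t) := by
  obtain ⟨g, hg⟩ := hC.exists_mem_L
    (D := Finsupp.single O (divDeg k res R + t) - R)
    (by rw [divDeg_sub, divDeg_single, hO]; simp)
  rw [hC.coe_mem_L] at hg
  refine ⟨g, _, hg, ?_, by abel⟩
  rw [divDeg_add, divDeg_sub, divDeg_single, hO, divDeg_divisor]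
  simp

lemma mem_L_of_divisor_eq (hC : IsProjCurve k F res ord ev L t) {g : Fˣ} {S : Pt →₀ ℤ} {m : ℤ}
    (hS : 0 ≤ S) (hg : hC.divisor g = S - Finsupp.single O m) :
    (g : F) ∈ L (Finsupp.single O m) := by
  rw [hC.coe_mem_L, hg, add_sub_cancel]
  exact hS

/-- `supportedUnits` is generated by its elements with pole order at most `n + t` at `O` and no
other poles. -/
lemma supportedUnits_le (hC : IsProjCurve k F res ord ev L t) (hO : finrank k (res O) = 1)
    {n : ℕ} (hn : 3 * t ≤ n) (W : Subgroup Fˣ)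
    (hW : ∀ u ∈ hC.supportedUnits O n, (u : F) ∈ L (Finsupp.single O (n + t : ℤ)) → u ∈ W) :
    hC.supportedUnits O n ≤ W := by
  have hW' : ∀ {g : Fˣ} {S : Pt →₀ ℤ} {m : ℤ}, 0 ≤ S → m ≤ n →
      hC.divisor g = S - Finsupp.single O m → g ∈ W := fun hS hm hg =>
    hW _ (hC.mem_supportedUnits_of_mem_L hO hm (hC.mem_L_of_divisor_eq hS hg))
      (hC.L_single_mono (by omega) (hC.mem_L_of_divisor_eq hS hg))
  have hflip : ∀ R : Pt →₀ ℤ, 0 ≤ R → divDeg k res R ≤ 2 * t → ∃ g ∈ W, ∃ (R' : Pt →₀ ℤ) (m : ℤ),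
      0 ≤ R' ∧ divDeg k res R' ≤ t ∧ hC.divisor g = R + R' - Finsupp.single O m := by
    intro R hR hdeg
    obtain ⟨g, R', hR', hdeg', hg⟩ := hC.exists_divisor_eq_add hO R
    exact ⟨g, hW' (add_nonneg hR hR') (by omega) hg, R', _, hR', hdeg'.le, hg⟩
  let M : AddSubgroup (Pt →₀ ℤ) :=
    { carrier := {D | ∃ f ∈ W, ∃ (R : Pt →₀ ℤ) (m : ℤ), 0 ≤ R ∧ divDeg k res R ≤ t ∧
        hC.divisor f = D + R - Finsupp.single O m}
      zero_mem' := ⟨1, W.one_mem, 0, 0, le_rfl, by simp [divDeg], by simp [divisor_one]⟩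
      add_mem' := by
        rintro D₁ D₂ ⟨f₁, hf₁, R₁, m₁, hR₁, hd₁, h₁⟩ ⟨f₂, hf₂, R₂, m₂, hR₂, hd₂, h₂⟩
        obtain ⟨g, hg, S, m, hS, hdS, hdg⟩ := hflip (R₁ + R₂) (add_nonneg hR₁ hR₂)
          (by rw [divDeg_add]; omega)
        obtain ⟨h, hh, R, m', hR, hdR, hdh⟩ := hflip S hS (by omega)
        refine ⟨f₁ * f₂ * h / g, W.div_mem (W.mul_mem (W.mul_mem hf₁ hf₂) hh) hg, R,
          m₁ + m₂ + m' - m, hR, hdR, ?_⟩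
        rw [divisor_div, divisor_mul, divisor_mul, h₁, h₂, hdg, hdh, Finsupp.single_sub,
          Finsupp.single_add, Finsupp.single_add]
        abel
      neg_mem' := by
        rintro D ⟨f, hf, R, m, hR, hd, h⟩
        obtain ⟨g, hg, S, m', hS, hdS, hdg⟩ := hflip R hR (by omega)
        refine ⟨g / f, W.div_mem hg hf, S, m' - m, hS, hdS, ?_⟩
        rw [divisor_div, h, hdg, Finsupp.single_sub]
        abel }
  intro u hu
  have huM : hC.divisor u ∈ M := by
    refine Finsupp.mem_addSubgroup_of_single_mem _ _ fun Q hQ => ?_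
    by_cases hQO : Q = O
    · exact ⟨1, W.one_mem, 0, 1, le_rfl, by simp [divDeg], by simp [divisor_one, hQO]⟩
    · have hQn := hu Q hQO hQ
      obtain ⟨g, R, hR, hdR, hdg⟩ := hC.exists_divisor_eq_add hO (Finsupp.single Q 1)
      have h1 : (0 : Pt →₀ ℤ) ≤ Finsupp.single Q 1 := by simp
      refine ⟨g, hW g ?_ ?_, R, _, hR, hdR.le, hdg⟩
      · intro P hP hPg
        rw [hdg] at hPg
        by_cases hPQ : P = Q
        · exact hPQ ▸ hQn
        · have := finrank_le_divDeg k res hR (P := P) (by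
            intro h0
            simp [h0, hP, hPQ] at hPg)
          omega
      · refine hC.L_single_mono ?_ (hC.mem_L_of_divisor_eq (add_nonneg h1 hR) hdg)
        rw [divDeg_single]
        omega
  obtain ⟨f, hf, R, m, hR, hdR, hdf⟩ := huM
  have hfu : hC.divisor (f / u) = R - Finsupp.single O m := by
    rw [divisor_div, hdf]
    abel
  have hm : m ≤ t := by
    have := hC.divDeg_divisor (f / u)
    rw [hfu, divDeg_sub, divDeg_single, hO] at this
    push_cast at this
    omega
  have := W.div_mem hf (hW' hR (by omega) hfu)
  rwa [div_div_cancel] at this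
/-- Evaluation at a point `P ≠ O` of the functions in `L(mO)`. -/
def evalL (hC : IsProjCurve k F res ord ev L t) {P : Pt} (hP : P ≠ O) (m : ℤ) :
    L (Finsupp.single O m) →ₗ[k] res P where
  toFun f := ev P f
  map_add' f g := by
    by_cases hf : (f : F) = 0
    · simp [hf, hC.ev_zero]
    by_cases hg : (g : F) = 0
    · simp [hg, hC.ev_zero]
    exact hC.ev_add P f g hf hg (hC.ord_nonneg_of_mem_L (u := Units.mk0 _ hf) f.2 hP)
      (hC.ord_nonneg_of_mem_L (u := Units.mk0 _ hg) g.2 hP)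
  map_smul' c f := by
    by_cases hf : (f : F) = 0
    · simp [hf, hC.ev_zero]
    by_cases hc : c = 0
    · simp [hc, hC.ev_zero]
    have hc' : algebraMap k F c ≠ 0 := by simpa using hc
    simp only [SetLike.val_smul, Algebra.smul_def, RingHom.id_apply]
    rw [hC.ev_mul P _ _ hc' hf (hC.ord_algebraMap P c hc).ge
      (hC.ord_nonneg_of_mem_L (u := Units.mk0 _ hf) f.2 hP), hC.ev_algebraMap]

@[simp]
lemma evalL_apply (hC : IsProjCurve k F res ord ev L t) {P : Pt} (hP : P ≠ O) (m : ℤ)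
    (f : L (Finsupp.single O m)) : hC.evalL hP m f = ev P f := rfl

lemma evalL_injective (hC : IsProjCurve k F res ord ev L t) (hO : finrank k (res O) = 1)
    {P : Pt} (hP : P ≠ O) {m : ℤ} (hm : m < finrank k (res P)) :
    Function.Injective (hC.evalL hP m) := by
  rw [injective_iff_map_eq_zero]
  intro f hf
  by_contra h
  have h0 : (f : F) ≠ 0 := by simpa using h
  have hmem : ((Units.mk0 (f : F) h0 : Fˣ) : F) ∈ L (Finsupp.single O m) := f.2
  have hpos := (hC.ev_eq_zero_iff P f h0 (hC.ord_nonneg_of_mem_L hmem hP)).1 hf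
  have := hC.finrank_le_of_mem_L hO hmem hP hpos.ne'
  omega

lemma ev_ne_zero (hC : IsProjCurve k F res ord ev L t) {P : Pt} {u : Fˣ}
    (h : ord P (u : F) = 0) : ev P u ≠ 0 := fun h0 =>
  ((hC.ev_eq_zero_iff P u u.ne_zero h.ge).1 h0).ne' h

lemma ev_units_mul (hC : IsProjCurve k F res ord ev L t) {P : Pt} {u v : Fˣ}
    (hu : ord P (u : F) = 0) (hv : ord P (v : F) = 0) :
    ev P ((u * v : Fˣ) : F) = ev P u * ev P v :=
  hC.ev_mul P u v u.ne_zero v.ne_zero hu.ge hv.ge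

lemma ev_units_inv (hC : IsProjCurve k F res ord ev L t) {P : Pt} {u : Fˣ}
    (hu : ord P (u : F) = 0) : ev P ((u⁻¹ : Fˣ) : F) = (ev P u)⁻¹ := by
  have hu' : ord P ((u⁻¹ : Fˣ) : F) = 0 := by
    rw [← hC.divisor_apply, divisor_inv, Finsupp.neg_apply, divisor_apply, hu, neg_zero]
  rw [eq_comm, inv_eq_of_mul_eq_one_left]
  rw [← hC.ev_units_mul hu' hu, inv_mul_cancel,
    Units.val_one, hC.ev_one]

lemma le_finrank_L (hC : IsProjCurve k F res ord ev L t) (hO : finrank k (res O) = 1) (m : ℤ) :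
    m + 1 - t ≤ finrank k (L (Finsupp.single O m)) := by
  simpa [divDeg_single, hO] using hC.rr_ineq (Finsupp.single O m)

/-- Every nonzero residue at `P` is the value of a quotient `a / b` with `a ∈ L((deg P - 1)O)`
and `b ∈ L(2tO)`. -/
lemma exists_ev_eq_mul (hC : IsProjCurve k F res ord ev L t) (hO : finrank k (res O) = 1)
    {n : ℕ} (hn : 3 * t ≤ n) {P : Pt} (hP : P ≠ O) (hPn : finrank k (res P) = n + 1)
    {y : res P} (hy : y ≠ 0) :
    ∃ a b : Fˣ, (a : F) ∈ L (Finsupp.single O (n : ℤ)) ∧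
      (b : F) ∈ L (Finsupp.single O (2 * t : ℤ)) ∧ ev P a = y * ev P b := by
  have := hC.finiteDimensional_L
  have := hC.finiteDimensional_res P
  let φ : (L (Finsupp.single O (n : ℤ)) × L (Finsupp.single O (2 * t : ℤ))) →ₗ[k] res P :=
    (hC.evalL hP n).coprod (-(LinearMap.mulLeft k y ∘ₗ hC.evalL hP (2 * t)))
  obtain ⟨⟨a, b⟩, hab, hne⟩ := φ.ker.ne_bot_iff.1 <| LinearMap.ker_ne_bot_of_finrank_lt (by
    have h1 := hC.le_finrank_L hO n
    have h2 := hC.le_finrank_L hO (2 * t)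
    rw [finrank_prod]
    omega)
  have heq : ev P a = y * ev P b := by
    simpa [φ, ← sub_eq_add_neg, sub_eq_zero] using hab
  have ha := hC.evalL_injective hO hP (m := n) (by omega)
  have hb := hC.evalL_injective hO hP (m := 2 * t) (by omega)
  have ha0 : a = 0 ↔ ev P a = 0 := by rw [← hC.evalL_apply hP, map_eq_zero_iff _ ha]
  have hb0 : b = 0 ↔ ev P b = 0 := by rw [← hC.evalL_apply hP, map_eq_zero_iff _ hb]
  have hiff : a = 0 ↔ b = 0 := by rw [ha0, hb0, heq, mul_eq_zero, or_iff_right hy]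
  have hane : a ≠ 0 := fun h => hne (by rw [hiff.1 h, h]; rfl)
  have hbne : b ≠ 0 := fun h => hane (hiff.2 h)
  exact ⟨Units.mk0 a (by simpa using hane), Units.mk0 b (by simpa using hbne), a.2, b.2, heq⟩

/-- Any two nonzero residues at `P` are the values of quotients `a / b` and `b / c` with
`a`, `b`, `c` in `L((deg P - 1)O)`. -/
lemma exists_ev_eq_mul_and (hC : IsProjCurve k F res ord ev L t) (hO : finrank k (res O) = 1)
    {n : ℕ} (hn : 3 * t ≤ n) {P : Pt} (hP : P ≠ O) (hPn : finrank k (res P) = n + 1)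
    {y z : res P} (hy : y ≠ 0) (hz : z ≠ 0) :
    ∃ a b c : Fˣ, (a : F) ∈ L (Finsupp.single O (n : ℤ)) ∧
      (b : F) ∈ L (Finsupp.single O (n : ℤ)) ∧ (c : F) ∈ L (Finsupp.single O (n : ℤ)) ∧
      ev P a = y * ev P b ∧ ev P b = z * ev P c := by
  have := hC.finiteDimensional_L
  have := hC.finiteDimensional_res P
  let V := L (Finsupp.single O (n : ℤ))
  let e : V →ₗ[k] res P := hC.evalL hP n
  let φ : (V × V × V) →ₗ[k] res P × res P :=
    (e.coprod ((-(LinearMap.mulLeft k y ∘ₗ e)).coprod 0)).prod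
      (LinearMap.coprod 0 (e.coprod (-(LinearMap.mulLeft k z ∘ₗ e))))
  obtain ⟨⟨a, b, c⟩, habc, hne⟩ := φ.ker.ne_bot_iff.1 <| LinearMap.ker_ne_bot_of_finrank_lt (by
    have h1 : (n : ℤ) + 1 - t ≤ finrank k V := hC.le_finrank_L hO n
    rw [finrank_prod, finrank_prod, finrank_prod]
    omega)
  obtain ⟨hab, hbc⟩ : ev P a = y * ev P b ∧ ev P b = z * ev P c := by
    simpa [φ, e, ← sub_eq_add_neg, sub_eq_zero] using habc
  have hinj := hC.evalL_injective hO hP (m := n) (by omega)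
  have h0 (f : V) : f = 0 ↔ ev P f = 0 := by rw [← hC.evalL_apply hP, map_eq_zero_iff _ hinj]
  have hiff₁ : a = 0 ↔ b = 0 := by rw [h0, h0, hab, mul_eq_zero, or_iff_right hy]
  have hiff₂ : b = 0 ↔ c = 0 := by rw [h0, h0, hbc, mul_eq_zero, or_iff_right hz]
  have hane : a ≠ 0 := fun h => hne (by rw [hiff₂.1 (hiff₁.1 h), hiff₁.1 h, h]; rfl)
  have hbne : b ≠ 0 := fun h => hane (hiff₁.2 h)
  have hcne : c ≠ 0 := fun h => hbne (hiff₂.2 h)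
  exact ⟨Units.mk0 a (by simpa using hane), Units.mk0 b (by simpa using hbne),
    Units.mk0 c (by simpa using hcne), a.2, b.2, c.2, hab, hbc⟩

/-- A function in `L(mO)` vanishing at `P`. -/
structure IsVanishing (L : (Pt →₀ ℤ) → Submodule k F) (ord : Pt → F → ℤ) (O P : Pt) (m : ℤ)
    (u : Fˣ) : Prop where
  mem_L : (u : F) ∈ L (Finsupp.single O m)
  ord_ne_zero : ord P (u : F) ≠ 0

lemma exists_isVanishing (hC : IsProjCurve k F res ord ev L t) (hO : finrank k (res O) = 1)
    {P : Pt} (hP : P ≠ O) : ∃ u : Fˣ, IsVanishing L ord O P (finrank k (res P) + t) u := by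
  obtain ⟨g, R, hR, -, hg⟩ := hC.exists_divisor_eq_add hO (Finsupp.single P 1)
  rw [divDeg_single, mul_one] at hg
  refine ⟨g, hC.mem_L_of_divisor_eq (add_nonneg (by simp) hR) hg, ?_⟩
  have : ord P (g : F) = 1 + R P := by
    rw [← hC.divisor_apply, hg]
    simp [hP]
  have := hR P
  simp at this
  omega

lemma IsVanishing.ord_eq (hC : IsProjCurve k F res ord ev L t) (hO : finrank k (res O) = 1)
    {n : ℕ} {P : Pt} (hP : P ≠ O) (hPn : finrank k (res P) = n + 1) {m : ℤ}
    (hm : m ≤ 2 * n + 1) {u : Fˣ} (hu : IsVanishing L ord O P m u) {Q : Pt}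
    (hQ : Q ≠ O) (hQn : n < finrank k (res Q)) : ord Q (u : F) = Finsupp.single P 1 Q := by
  by_contra h
  have := hC.finrank_add_finrank_le_of_mem_L hO hu.mem_L hP hu.ord_ne_zero hQ (Ne.symm h)
  omega

lemma symbol_mem_Fsub (hC : IsProjCurve k F res ord ev L t) (hO : finrank k (res O) = 1)
    {n : ℕ} {u v : Fˣ} (hu : u ∈ hC.supportedUnits O n) (hv : v ∈ hC.supportedUnits O n) :
    symbol u v ∈ Fsub k res ord n := by
  have key : ∀ w ∈ hC.supportedUnits O n, ∀ P, ord P (w : F) ≠ 0 → finrank k (res P) ≤ n := by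
    intro w hw P hP
    by_cases hPO : P = O
    · subst hPO
      by_contra hlt
      have hw0 : hC.divisor w = Finsupp.single P (ord P (w : F)) := by
        ext Q
        by_cases hQ : Q = P
        · simp [hQ]
        · have := hC.finrank_res_pos Q
          rw [Finsupp.single_eq_of_ne hQ]
          exact hC.ord_eq_zero_of_mem_supportedUnits hw hQ (by omega)
      have hdeg := hC.divDeg_divisor w
      rw [hw0, divDeg_single, hO] at hdeg
      exact hP (by simpa using hdeg)
    · exact hw P hPO hP
  exact AddSubgroup.subset_closure ⟨u, v, key u hu, key v hv, rfl⟩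

/-- If `X` and `Y` agree at `P`, then `{X / Y, π}` lies in the lower filtration step, where `π` is
a uniformizer at `P`. -/
lemma symbol_div_mem_Fsub (hC : IsProjCurve k F res ord ev L t) (hO : finrank k (res O) = 1)
    {n : ℕ} {P : Pt} (hP : P ≠ O) (hPn : finrank k (res P) = n + 1) {m : ℤ}
    (hm : m ≤ 2 * n + 1) {π : Fˣ} (hπ : IsVanishing L ord O P m π) {X Y : Fˣ}
    (hX : X ∈ hC.supportedUnits O n) (hY : Y ∈ hC.supportedUnits O n)
    (hXL : (X : F) ∈ L (Finsupp.single O (2 * n + 1 : ℤ)))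
    (hYL : (Y : F) ∈ L (Finsupp.single O (2 * n + 1 : ℤ))) (hXY : ev P X = ev P Y) :
    symbol (X / Y) π ∈ Fsub k res ord n := by
  by_cases h : X = Y
  · rw [h, div_self', symbol_one_left]
    exact AddSubgroup.zero_mem _
  have hZ0 : (X - Y : F) ≠ 0 := sub_ne_zero.2 fun h' => h (Units.ext h')
  let Z : Fˣ := Units.mk0 _ hZ0
  have hZL : (Z : F) ∈ L (Finsupp.single O (2 * n + 1 : ℤ)) := Submodule.sub_mem _ hXL hYL
  have hZev : ev P Z = 0 := by
    have := map_sub (hC.evalL hP _) ⟨_, hXL⟩ ⟨_, hYL⟩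
    simpa [hXY, Z] using this
  have hZ : IsVanishing L ord O P (2 * n + 1) Z :=
    ⟨hZL, ((hC.ev_eq_zero_iff P Z hZ0 (hC.ord_nonneg_of_mem_L hZL hP)).1 hZev).ne'⟩
  have hZπ : Z / π ∈ hC.supportedUnits O n := by
    intro Q hQ hQ0
    by_contra hlt
    rw [not_le] at hlt
    refine hQ0 ?_
    rw [divisor_div, Finsupp.sub_apply, divisor_apply, divisor_apply,
      hZ.ord_eq hC hO hP hPn le_rfl hQ hlt, hπ.ord_eq hC hO hP hPn hm hQ hlt, sub_self]
  have hst : symbol (X / Y) (-1 * (Z / π) / Y * π) = 0 := by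
    refine symbol_eq_zero_of_add_eq_one ?_
    have := Y.ne_zero
    have := π.ne_zero
    simp only [Units.val_div_eq_div_val, Units.val_mul, Units.val_neg, Units.val_one, Z,
      Units.val_mk0]
    field_simp
    ring
  rw [symbol_mul_right] at hst
  rw [eq_neg_of_add_eq_zero_right hst]
  exact AddSubgroup.neg_mem _ (hC.symbol_mem_Fsub hO (Subgroup.div_mem _ hX hY)
    (Subgroup.div_mem _ (Subgroup.mul_mem _ (hC.neg_one_mem_supportedUnits n) hZπ) hY))

/-- The class of `{u, π}` modulo the lower filtration step depends only on `u(P)`. -/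
lemma symbol_mem_Fsub_of_ev_eq_one (hC : IsProjCurve k F res ord ev L t)
    (hO : finrank k (res O) = 1) {n : ℕ} (hn : 3 * t ≤ n) {P : Pt} (hP : P ≠ O)
    (hPn : finrank k (res P) = n + 1) {m : ℤ} (hm : m ≤ 2 * n + 1) {π : Fˣ}
    (hπ : IsVanishing L ord O P m π) {u : Fˣ} (hu : u ∈ hC.supportedUnits O n)
    (hu1 : ev P u = 1) : symbol u π ∈ Fsub k res ord n := by
  have hord : ∀ {w : Fˣ}, w ∈ hC.supportedUnits O n → ord P (w : F) = 0 := fun hw =>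
    hC.ord_eq_zero_of_mem_supportedUnits hw hP (by omega)
  have hV : ∀ {w : Fˣ}, (w : F) ∈ L (Finsupp.single O (n : ℤ)) → w ∈ hC.supportedUnits O n :=
    fun hw => hC.mem_supportedUnits_of_mem_L hO le_rfl hw
  have hcross : ∀ {a b a' b' : Fˣ}, (a : F) ∈ L (Finsupp.single O (n : ℤ)) →
      (b : F) ∈ L (Finsupp.single O (n : ℤ)) → (a' : F) ∈ L (Finsupp.single O (n : ℤ)) →
      (b' : F) ∈ L (Finsupp.single O (n : ℤ)) → ∀ y, ev P a = y * ev P b →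
      ev P a' = y * ev P b' → symbol ((a * b') / (a' * b)) π ∈ Fsub k res ord n := by
    intro a b a' b' ha hb ha' hb' y h h'
    have hmul : ∀ {v w : Fˣ}, (v : F) ∈ L (Finsupp.single O (n : ℤ)) →
        (w : F) ∈ L (Finsupp.single O (n : ℤ)) →
        ((v * w : Fˣ) : F) ∈ L (Finsupp.single O (2 * n + 1 : ℤ)) := fun hv hw =>
      hC.L_single_mono (by omega) (hC.mul_mem_L_single hv hw)
    refine hC.symbol_div_mem_Fsub hO hP hPn hm hπ (Subgroup.mul_mem _ (hV ha) (hV hb'))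
      (Subgroup.mul_mem _ (hV ha') (hV hb)) (hmul ha hb') (hmul ha' hb) ?_
    rw [hC.ev_units_mul (hord (hV ha)) (hord (hV hb')),
      hC.ev_units_mul (hord (hV ha')) (hord (hV hb)), h, h']
    ring
  let W : Subgroup Fˣ :=
    { carrier := {w | w ∈ hC.supportedUnits O n ∧ ∃ a b : Fˣ,
        (a : F) ∈ L (Finsupp.single O (n : ℤ)) ∧ (b : F) ∈ L (Finsupp.single O (n : ℤ)) ∧
        ev P a = ev P w * ev P b ∧ symbol (w * b / a) π ∈ Fsub k res ord n}
      one_mem' := by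
        have h1 : ((1 : Fˣ) : F) ∈ L (Finsupp.single O (n : ℤ)) := by
          rw [hC.coe_mem_L, divisor_one]
          simp
        refine ⟨Subgroup.one_mem _, 1, 1, h1, h1, by simp [hC.ev_one], ?_⟩
        simp [symbol_one_left]
      mul_mem' := by
        rintro w₁ w₂ ⟨hw₁, a₁, b₁, ha₁, hb₁, he₁, hs₁⟩ ⟨hw₂, a₂, b₂, ha₂, hb₂, he₂, hs₂⟩
        obtain ⟨a, b, c, ha, hb, hc, hab, hbc⟩ := hC.exists_ev_eq_mul_and hO hn hP hPn
          (hC.ev_ne_zero (hord hw₁)) (hC.ev_ne_zero (hord hw₂))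
        refine ⟨Subgroup.mul_mem _ hw₁ hw₂, a, c, ha, hc, ?_, ?_⟩
        · rw [hC.ev_units_mul (hord hw₁) (hord hw₂), hab, hbc, mul_assoc]
        · have h₁ := hcross ha₁ hb₁ ha hb _ he₁ hab
          have h₂ := hcross ha₂ hb₂ hb hc _ he₂ hbc
          have heq : w₁ * w₂ * c / a = (w₁ * b₁ / a₁) * (w₂ * b₂ / a₂) *
              ((a₁ * b) / (a * b₁) * ((a₂ * c) / (b * b₂))) := by
            ext
            simp only [Units.val_div_eq_div_val, Units.val_mul]
            field_simp
          rw [heq, symbol_mul_left, symbol_mul_left, symbol_mul_left]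
          exact AddSubgroup.add_mem _ (AddSubgroup.add_mem _ hs₁ hs₂)
            (AddSubgroup.add_mem _ h₁ h₂)
      inv_mem' := by
        rintro w ⟨hw, a, b, ha, hb, he, hs⟩
        refine ⟨Subgroup.inv_mem _ hw, b, a, hb, ha, ?_, ?_⟩
        · rw [hC.ev_units_inv (hord hw), he, inv_mul_cancel_left₀ (hC.ev_ne_zero (hord hw))]
        · have heq : w⁻¹ * a / b = (w * b / a)⁻¹ := by
            ext
            simp only [Units.val_div_eq_div_val, Units.val_mul, Units.val_inv_eq_inv_val]
            field_simp
          rw [heq, symbol_inv_left]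
          exact AddSubgroup.neg_mem _ hs }
  have hW : hC.supportedUnits O n ≤ W := by
    refine hC.supportedUnits_le hO hn W fun w hw hwL => ?_
    obtain ⟨a, b, ha, hb, he⟩ := hC.exists_ev_eq_mul hO hn hP hPn (hC.ev_ne_zero (hord hw))
    have hb' : (b : F) ∈ L (Finsupp.single O (n : ℤ)) := hC.L_single_mono (by omega) hb
    refine ⟨hw, a, b, ha, hb', he, hC.symbol_div_mem_Fsub hO hP hPn hm hπ
      (Subgroup.mul_mem _ hw (hV hb')) (hV ha) ?_ (hC.L_single_mono (by omega) ha) ?_⟩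
    · exact hC.L_single_mono (by omega) (hC.mul_mem_L_single hwL hb)
    · rw [hC.ev_units_mul (hord hw) (hord (hV hb')), he]
  obtain ⟨-, a, b, ha, hb, he, hs⟩ := hW hu
  have hab : a = b := by
    have h : hC.evalL hP n ⟨a, ha⟩ = hC.evalL hP n ⟨b, hb⟩ := by simpa [hu1] using he
    have := hC.evalL_injective hO hP (by omega) h
    exact Units.ext (by simpa using this)
  rwa [hab, mul_div_cancel_right] at hs

lemma IsVanishing.eq_zero_of_mul_mem_L (hC : IsProjCurve k F res ord ev L t)
    (hO : finrank k (res O) = 1) {n : ℕ} {P : Pt} (hP : P ≠ O)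
    (hPn : finrank k (res P) = n + 1) {m l : ℤ} {π : Fˣ} (hπ : IsVanishing L ord O P m π) {f : F}
    (hf : f ∈ L (Finsupp.single O l)) (hπf : (π : F) * f ∈ L (Finsupp.single O (n : ℤ))) :
    f = 0 := by
  by_contra hf0
  have hmem : ((π * Units.mk0 f hf0 : Fˣ) : F) ∈ L (Finsupp.single O (n : ℤ)) := hπf
  have h1 := hC.ord_mul P π f π.ne_zero hf0
  have h2 := hC.ord_nonneg_of_mem_L hπ.mem_L hP
  have h3 := hC.ord_nonneg_of_mem_L (u := Units.mk0 f hf0) hf hP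
  have h4 := hπ.ord_ne_zero
  have := hC.finrank_le_of_mem_L hO hmem hP (by
    simp only [Units.val_mul, Units.val_mk0] at h3 ⊢
    omega)
  omega

/-- A three-term relation between uniformizers at two distinct points of the same degree. -/
lemma exists_mul_sub_mul_eq (hC : IsProjCurve k F res ord ev L t)
    (hO : finrank k (res O) = 1) {n : ℕ} (hn : 3 * t ≤ n) {P Q : Pt} (hP : P ≠ O) (hQ : Q ≠ O)
    (hPQ : P ≠ Q) (hPn : finrank k (res P) = n + 1) (hQn : finrank k (res Q) = n + 1)
    {π ρ : Fˣ} (hπ : IsVanishing L ord O P (n + 1 + t) π)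
    (hρ : IsVanishing L ord O Q (n + 1 + t) ρ) :
    ∃ a ∈ hC.supportedUnits O n, ∃ b ∈ hC.supportedUnits O n, ∃ c ∈ hC.supportedUnits O n,
      (π * a - ρ * b : F) = c := by
  have := hC.finiteDimensional_L
  let V := L (Finsupp.single O (3 * t : ℤ))
  let V' := L (Finsupp.single O (n : ℤ))
  let M := L (Finsupp.single O (n + 1 + t + 3 * t : ℤ))
  let φ : (V × V × V') →ₗ[k] M :=
    LinearMap.codRestrict M
      ((LinearMap.mulLeft k (π : F) ∘ₗ V.subtype).coprod
        ((-(LinearMap.mulLeft k (ρ : F) ∘ₗ V.subtype)).coprod (-V'.subtype))) (by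
      rintro ⟨a, b, c⟩
      have ha := hC.mul_mem_L_single hπ.mem_L a.2
      have hb := hC.mul_mem_L_single hρ.mem_L b.2
      have hc := hC.L_single_mono (show (n : ℤ) ≤ n + 1 + t + 3 * t by omega) c.2
      exact M.add_mem ha (M.add_mem (M.neg_mem hb) (M.neg_mem hc)))
  obtain ⟨⟨a, b, c⟩, habc, hne⟩ := φ.ker.ne_bot_iff.1 <| LinearMap.ker_ne_bot_of_finrank_lt (by
    have h1 : (3 * t : ℤ) + 1 - t ≤ finrank k V := hC.le_finrank_L hO _
    have h2 : (n : ℤ) + 1 - t ≤ finrank k V' := hC.le_finrank_L hO _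
    have h3 : (finrank k M : ℤ) = n + 1 + t + 3 * t + 1 - t := by
      have := hC.rr_eq (Finsupp.single O (n + 1 + t + 3 * t : ℤ)) (by
        rw [divDeg_single, hO]
        omega)
      rwa [divDeg_single, hO, Nat.cast_one, one_mul] at this
    rw [finrank_prod, finrank_prod]
    omega)
  have heq : (π * a - ρ * b : F) = c := by
    have h := congrArg Subtype.val (LinearMap.mem_ker.1 habc)
    have h' : (π * a + (-(ρ * b) + -c) : F) = 0 := h
    linear_combination h'
  have ha : (a : F) ≠ 0 := by
    intro ha
    have hb : (b : F) = 0 := hρ.eq_zero_of_mul_mem_L hC hO hQ hQn b.2 (by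
      have h : (ρ * b : F) = -c := by linear_combination π * ha - heq
      rw [h]
      exact V'.neg_mem c.2)
    have hc : (c : F) = 0 := by linear_combination π * ha - ρ * hb - heq
    exact hne (by
      rw [ZeroMemClass.coe_eq_zero] at ha hb hc
      rw [ha, hb, hc]
      rfl)
  have hb : (b : F) ≠ 0 := fun hb => ha <| hπ.eq_zero_of_mul_mem_L hC hO hP hPn a.2 (by
    have h : (π * a : F) = c := by linear_combination heq + ρ * hb
    rw [h]
    exact c.2)
  have hc : (c : F) ≠ 0 := by
    intro hc
    have h : (π * a : F) = ρ * b := by linear_combination heq + hc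
    have hord := congrArg (ord P) h
    rw [hC.ord_mul P _ _ π.ne_zero ha, hC.ord_mul P _ _ ρ.ne_zero hb,
      hρ.ord_eq hC hO hQ hQn (by omega) hP (by omega), Finsupp.single_eq_of_ne hPQ] at hord
    have h1 := hC.ord_nonneg_of_mem_L hπ.mem_L hP
    have h2 := hC.ord_nonneg_of_mem_L (u := Units.mk0 _ ha) a.2 hP
    have h3 := hπ.ord_ne_zero
    have := hC.finrank_le_of_mem_L (u := Units.mk0 _ hb) hO b.2 hP (by
      simp only [Units.val_mk0] at h2 ⊢
      omega)
    omega
  exact ⟨Units.mk0 _ ha, hC.mem_supportedUnits_of_mem_L hO (by omega) a.2,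
    Units.mk0 _ hb, hC.mem_supportedUnits_of_mem_L hO (by omega) b.2,
    Units.mk0 _ hc, hC.mem_supportedUnits_of_mem_L hO le_rfl c.2, heq⟩

/-- The functions supported in degree at most `n + 1` are generated by those supported in degree
at most `n` and a uniformizer at each point of degree `n + 1`. -/
lemma supportedUnits_succ_le (hC : IsProjCurve k F res ord ev L t)
    (hO : finrank k (res O) = 1) {n : ℕ} (hn : 3 * t ≤ n) {π : Pt → Fˣ}
    (hπ : ∀ P, P ≠ O → finrank k (res P) = n + 1 → IsVanishing L ord O P (n + 1 + t) (π P)) :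
    hC.supportedUnits O (n + 1) ≤ Subgroup.closure
      (hC.supportedUnits O n ∪ {w | ∃ P, P ≠ O ∧ finrank k (res P) = n + 1 ∧ w = π P}) := by
  set K := Subgroup.closure
    (hC.supportedUnits O n ∪ {w | ∃ P, P ≠ O ∧ finrank k (res P) = n + 1 ∧ w = π P})
  let M : AddSubgroup (Pt →₀ ℤ) :=
    { carrier := {D | ∃ g ∈ K, ∀ Q, Q ≠ O → n < finrank k (res Q) → hC.divisor g Q = D Q}
      zero_mem' := ⟨1, K.one_mem, fun Q _ _ => by simp [divisor_one]⟩
      add_mem' := by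
        rintro D₁ D₂ ⟨g₁, hg₁, h₁⟩ ⟨g₂, hg₂, h₂⟩
        exact ⟨g₁ * g₂, K.mul_mem hg₁ hg₂, fun Q hQ hQn => by
          rw [divisor_mul, Finsupp.add_apply, Finsupp.add_apply, h₁ Q hQ hQn, h₂ Q hQ hQn]⟩
      neg_mem' := by
        rintro D ⟨g, hg, h⟩
        exact ⟨g⁻¹, K.inv_mem hg, fun Q hQ hQn => by
          rw [divisor_inv, Finsupp.neg_apply, Finsupp.neg_apply, h Q hQ hQn]⟩ }
  intro f hf
  have hfM : hC.divisor f ∈ M := by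
    refine Finsupp.mem_addSubgroup_of_single_mem _ _ fun P hP0 => ?_
    by_cases hP : P ≠ O ∧ finrank k (res P) = n + 1
    · exact ⟨π P, Subgroup.subset_closure (Or.inr ⟨P, hP.1, hP.2, rfl⟩), fun Q hQ hQn =>
        (hπ P hP.1 hP.2).ord_eq hC hO hP.1 hP.2 (by omega) hQ hQn⟩
    · refine ⟨1, K.one_mem, fun Q hQ hQn => ?_⟩
      rw [divisor_one, Finsupp.single_eq_of_ne, Finsupp.zero_apply]
      rintro rfl
      have := hf Q hQ hP0
      exact hP ⟨hQ, by omega⟩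
  obtain ⟨g, hg, h⟩ := hfM
  have hfg : f / g ∈ hC.supportedUnits O n := fun Q hQ h0 => by
    by_contra hQn
    rw [not_le] at hQn
    exact h0 (by rw [divisor_div, Finsupp.sub_apply, h Q hQ hQn, sub_self])
  rw [← div_mul_cancel f g]
  exact K.mul_mem (Subgroup.subset_closure (Or.inl hfg)) hg

end BasePoint

end IsProjCurve

/-- The homomorphism `(u_P)_P ↦ ∑_P {u_P, π_P}`. -/
def symbolSum {F Pt : Type*} [Field F] (π : Pt → Fˣ) : (Pt →₀ Additive Fˣ) →+ K2 F :=
  Finsupp.liftAddHom fun P =>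
    { toFun u := symbol u.toMul (π P)
      map_zero' := symbol_one_left _
      map_add' _ _ := symbol_mul_left _ _ _ }

lemma symbolSum_apply {F Pt : Type*} [Field F] (π : Pt → Fˣ) (w : Pt →₀ Additive Fˣ) :
    symbolSum π w = w.sum fun P u => symbol u.toMul (π P) := rfl

namespace IsProjCurve

open Module

variable {k F : Type*} [Field k] [Field F] [Algebra k F]
  {Pt : Type*} {res : Pt → Type*} [∀ P, Field (res P)] [∀ P, Algebra k (res P)]
  {ord : Pt → F → ℤ} {ev : ∀ P, F → res P}
  {L : (Pt →₀ ℤ) → Submodule k F} {t : ℕ} {O : Pt}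

/-- Families of functions supported in degree at most `n`, indexed by the points other than `O` of
degree `n + 1`. -/
def unitFamilies (hC : IsProjCurve k F res ord ev L t) (O : Pt) (n : ℕ) :
    AddSubgroup (Pt →₀ Additive Fˣ) where
  carrier := {w | ∀ P, (w P).toMul ∈ hC.supportedUnits O n ∧
    (w P ≠ 0 → P ≠ O ∧ finrank k (res P) = n + 1)}
  zero_mem' P := ⟨Subgroup.one_mem _, fun h => absurd rfl h⟩
  add_mem' {v w} hv hw P := by
    refine ⟨Subgroup.mul_mem _ (hv P).1 (hw P).1, fun h => ?_⟩
    by_cases hvP : v P = 0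
    · exact (hw P).2 fun hwP => h (by rw [Finsupp.add_apply, hvP, hwP, add_zero])
    · exact (hv P).2 hvP
  neg_mem' {w} hw P := ⟨Subgroup.inv_mem _ (hw P).1, fun h => (hw P).2 (by simpa using h)⟩

lemma Fsub_succ_le (hC : IsProjCurve k F res ord ev L t)
    (hO : finrank k (res O) = 1) {n : ℕ} (hn : 3 * t ≤ n) {π : Pt → Fˣ}
    (hπ : ∀ P, P ≠ O → finrank k (res P) = n + 1 → IsVanishing L ord O P (n + 1 + t) (π P)) :
    Fsub k res ord (n + 1) ≤
      Fsub k res ord n ⊔ (hC.unitFamilies O n).map (symbolSum π) := by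
  set B := Fsub k res ord n ⊔ (hC.unitFamilies O n).map (symbolSum π)
  have hlow : ∀ {u v}, u ∈ hC.supportedUnits O n → v ∈ hC.supportedUnits O n →
      symbol u v ∈ B := fun hu hv =>
    (le_sup_left : Fsub k res ord n ≤ B) (hC.symbol_mem_Fsub hO hu hv)
  have hmix : ∀ {u}, u ∈ hC.supportedUnits O n → ∀ {P}, P ≠ O → finrank k (res P) = n + 1 →
      symbol u (π P) ∈ B := by
    classical
    intro u hu P hP hPn
    refine (le_sup_right : _ ≤ B) ⟨Finsupp.single P (Additive.ofMul u), fun Q => ?_, ?_⟩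
    · rw [Finsupp.single_apply]
      split_ifs with h
      · subst h
        exact ⟨hu, fun _ => ⟨hP, hPn⟩⟩
      · exact ⟨Subgroup.one_mem _, fun h => absurd rfl h⟩
    · rw [symbolSum_apply]
      exact Finsupp.sum_single_index (symbol_one_left _)
  have hmix' : ∀ {u}, u ∈ hC.supportedUnits O n → ∀ {P}, P ≠ O → finrank k (res P) = n + 1 →
      symbol (π P) u ∈ B := fun {u} hu {P} hP hPn => by
    rw [symbol_swap u]
    exact B.neg_mem (hmix hu hP hPn)
  have htop : ∀ {P Q}, P ≠ O → finrank k (res P) = n + 1 → Q ≠ O → finrank k (res Q) = n + 1 →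
      symbol (π P) (π Q) ∈ B := by
    intro P Q hP hPn hQ hQn
    by_cases hPQ : P = Q
    · rw [← hPQ, symbol_self]
      exact hmix' (hC.neg_one_mem_supportedUnits n) hP hPn
    obtain ⟨a, ha, b, hb, c, hc, habc⟩ := hC.exists_mul_sub_mul_eq hO hn hP hQ hPQ hPn hQn
      (hπ P hP hPn) (hπ Q hQ hQn)
    have hst : symbol (π P * (a / c)) (π Q * (-1 * b / c)) = 0 := by
      refine symbol_eq_zero_of_add_eq_one ?_
      have := c.ne_zero
      simp only [Units.val_div_eq_div_val, Units.val_mul, Units.val_neg, Units.val_one]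
      field_simp
      linear_combination habc
    have hac := Subgroup.div_mem _ ha hc
    have hbc := Subgroup.div_mem _ (Subgroup.mul_mem _ (hC.neg_one_mem_supportedUnits n) hb) hc
    rw [symbol_mul_left, symbol_mul_right, symbol_mul_right, add_assoc] at hst
    rw [eq_neg_of_add_eq_zero_left hst]
    exact B.neg_mem (B.add_mem (hmix' hbc hP hPn) (B.add_mem (hmix hac hQ hQn) (hlow hac hbc)))
  refine (AddSubgroup.closure_le _).2 ?_
  rintro _ ⟨f, g, hf, hg, rfl⟩
  have hf' := hC.supportedUnits_succ_le hO hn hπ (fun Q _ h => hf Q h)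
  have hg' := hC.supportedUnits_succ_le hO hn hπ (fun Q _ h => hg Q h)
  refine Subgroup.closure_induction₂ (p := fun f g _ _ => symbol f g ∈ B) ?_ ?_ ?_ ?_ ?_ ?_ ?_
    hf' hg'
  · rintro u v (hu | ⟨P, hP, hPn, rfl⟩) (hv | ⟨Q, hQ, hQn, rfl⟩)
    · exact hlow hu hv
    · exact hmix hu hQ hQn
    · exact hmix' hv hP hPn
    · exact htop hP hPn hQ hQn
  · intro u _
    rw [symbol_one_left]
    exact B.zero_mem
  · intro u _
    rw [symbol_one_right]
    exact B.zero_mem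
  · intro u v w _ _ _ h₁ h₂
    rw [symbol_mul_left]
    exact B.add_mem h₁ h₂
  · intro u v w _ _ _ h₁ h₂
    rw [symbol_mul_right]
    exact B.add_mem h₁ h₂
  · intro u v _ _ h
    rw [symbol_inv_left]
    exact B.neg_mem h
  · intro u v _ _ h
    rw [symbol_inv_right]
    exact B.neg_mem h

section Tame

variable {T : K2 F →+ Π₀ P : Pt, Additive ((res P)ˣ)}

lemma tame_symbol_of_ord_eq_zero (hT : IsTameSymbol ord ev T) {u v : Fˣ} {Q : Pt}
    (hu : ord Q (u : F) = 0) :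
    (((T (symbol u v) Q).toMul : (res Q)ˣ) : res Q) = ev Q ((u ^ ord Q (v : F) : Fˣ) : F) := by
  rw [hT, hu]
  simp

lemma tame_symbol_eq_zero (hC : IsProjCurve k F res ord ev L t) (hT : IsTameSymbol ord ev T)
    {u v : Fˣ} {Q : Pt} (hu : ord Q (u : F) = 0) (hv : ord Q (v : F) = 0) :
    T (symbol u v) Q = 0 := by
  refine Additive.toMul.injective (Units.ext ?_)
  rw [tame_symbol_of_ord_eq_zero hT hu, hv, zpow_zero, Units.val_one, hC.ev_one]
  rfl

lemma tame_eq_zero_of_mem_Fsub (hC : IsProjCurve k F res ord ev L t)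
    (hT : IsTameSymbol ord ev T) {n : ℕ} {x : K2 F} (hx : x ∈ Fsub k res ord n) {Q : Pt}
    (hQ : n < finrank k (res Q)) : T x Q = 0 := by
  induction hx using AddSubgroup.closure_induction with
  | mem x hx =>
    obtain ⟨f, g, hf, hg, rfl⟩ := hx
    refine hC.tame_symbol_eq_zero hT ?_ ?_
    · by_contra h
      exact absurd (hf Q h) (not_le.2 hQ)
    · by_contra h
      exact absurd (hg Q h) (not_le.2 hQ)
  | zero => simp
  | add x y _ _ hx hy => simp [hx, hy]
  | neg x _ hx => simp [hx]

/-- An element of the step `n + 1` of the filtration is in the step `n` if its tame symbol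
vanishes at all points other than `O` of degree `n + 1`. -/
lemma mem_Fsub_of_tame_eq_zero (hC : IsProjCurve k F res ord ev L t)
    (hO : finrank k (res O) = 1) (hT : IsTameSymbol ord ev T) {n : ℕ} (hn : 3 * t ≤ n)
    {π : Pt → Fˣ}
    (hπ : ∀ P, P ≠ O → finrank k (res P) = n + 1 → IsVanishing L ord O P (n + 1 + t) (π P))
    {x : K2 F} (hx : x ∈ Fsub k res ord (n + 1))
    (h0 : ∀ Q, Q ≠ O → finrank k (res Q) = n + 1 → T x Q = 0) : x ∈ Fsub k res ord n := by
  obtain ⟨x₀, hx₀, _, ⟨w, hw, rfl⟩, rfl⟩ := AddSubgroup.mem_sup.1 (hC.Fsub_succ_le hO hn hπ hx)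
  refine AddSubgroup.add_mem _ hx₀ ?_
  rw [symbolSum_apply]
  refine AddSubgroup.sum_mem _ fun Q hQ => ?_
  obtain ⟨hQO, hQn⟩ := (hw Q).2 (by simpa using hQ)
  have hord : ∀ P, ord Q ((w P).toMul : F) = 0 := fun P =>
    hC.ord_eq_zero_of_mem_supportedUnits (hw P).1 hQO (by omega)
  have hordπ : ∀ P ∈ w.support, ord Q (π P : F) = Finsupp.single P 1 Q := fun P hP => by
    obtain ⟨hPO, hPn⟩ := (hw P).2 (by simpa using hP)
    exact (hπ P hPO hPn).ord_eq hC hO hPO hPn (by omega) hQO (by omega)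
  refine hC.symbol_mem_Fsub_of_ev_eq_one hO hn hQO hQn (by omega) (hπ Q hQO hQn) (hw Q).1 ?_
  have hTQ := h0 Q hQO hQn
  rw [map_add, DFinsupp.add_apply, hC.tame_eq_zero_of_mem_Fsub hT hx₀ (by omega), zero_add,
    symbolSum_apply, Finsupp.sum, map_sum, DFinsupp.finsetSum_apply,
    Finset.sum_eq_single_of_mem Q hQ] at hTQ
  · have := tame_symbol_of_ord_eq_zero hT (v := π Q) (hord Q)
    rw [hTQ, hordπ Q hQ, Finsupp.single_eq_same, zpow_one] at this
    exact this.symm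
  · intro P hP hPQ
    exact hC.tame_symbol_eq_zero hT (hord P) (by rw [hordπ P hP, Finsupp.single_eq_of_ne hPQ.symm])

lemma exists_mem_Fsub_tame_eq (hC : IsProjCurve k F res ord ev L t)
    (hO : finrank k (res O) = 1) (hT : IsTameSymbol ord ev T) {n : ℕ} (hn : 3 * t ≤ n)
    {π : Pt → Fˣ}
    (hπ : ∀ P, P ≠ O → finrank k (res P) = n + 1 → IsVanishing L ord O P (n + 1 + t) (π P))
    (y : Π₀ P : Pt, Additive ((res P)ˣ)) :
    ∃ x ∈ Fsub k res ord (n + 1),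
      ∀ Q, Q ≠ O → finrank k (res Q) = n + 1 → T x Q = y Q := by
  classical
  induction y using DFinsupp.induction with
  | h0 => exact ⟨0, AddSubgroup.zero_mem _, by simp⟩
  | ha P b y _ _ ih =>
    obtain ⟨x, hx, hxy⟩ := ih
    suffices ∃ x' ∈ Fsub k res ord (n + 1), ∀ Q, Q ≠ O → finrank k (res Q) = n + 1 →
        T x' Q = (DFinsupp.single P b : Π₀ P : Pt, Additive ((res P)ˣ)) Q by
      obtain ⟨x', hx', hxy'⟩ := this
      exact ⟨x' + x, AddSubgroup.add_mem _ hx' hx, fun Q hQ hQn => by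
        rw [map_add, DFinsupp.add_apply, DFinsupp.add_apply, hxy Q hQ hQn, hxy' Q hQ hQn]⟩
    by_cases hP : P ≠ O ∧ finrank k (res P) = n + 1
    · obtain ⟨hPO, hPn⟩ := hP
      have hord : ∀ {u}, u ∈ hC.supportedUnits O n → ∀ {Q}, Q ≠ O → finrank k (res Q) = n + 1 →
          ord Q (u : F) = 0 := fun {_} hu {_} hQ hQn =>
        hC.ord_eq_zero_of_mem_supportedUnits hu hQ (by omega)
      have hordπ : ∀ {Q}, Q ≠ O → n < finrank k (res Q) →
          ord Q (π P : F) = Finsupp.single P 1 Q := fun hQ hQn =>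
        (hπ P hPO hPn).ord_eq hC hO hPO hPn (by omega) hQ hQn
      obtain ⟨u, v, hu, hv, huv⟩ := hC.exists_ev_eq_mul hO hn hPO hPn b.toMul.ne_zero
      have hu' := hC.mem_supportedUnits_of_mem_L hO le_rfl hu
      have hv' := hC.mem_supportedUnits_of_mem_L hO (n := n) (by omega) hv
      have hw := Subgroup.mul_mem _ hu' (Subgroup.inv_mem _ hv')
      have hmono : hC.supportedUnits O n ≤ hC.supportedUnits O (n + 1) := fun f hf Q hQ h =>
        (hf Q hQ h).trans n.le_succ
      refine ⟨symbol (u * v⁻¹) (π P), hC.symbol_mem_Fsub hO (hmono hw) fun Q hQ h => ?_,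
        fun Q hQ hQn => ?_⟩
      · by_contra hlt
        refine h ?_
        rw [divisor_apply, hordπ hQ (by omega), Finsupp.single_eq_of_ne]
        rintro rfl
        omega
      · by_cases hQP : P = Q
        · subst hQP
          refine Additive.toMul.injective (Units.ext ?_)
          rw [tame_symbol_of_ord_eq_zero hT (hord hw hQ hQn), hordπ hQ (by omega),
            Finsupp.single_eq_same, zpow_one, DFinsupp.single_eq_same,
            hC.ev_units_mul (hord hu' hQ hQn) (hord (Subgroup.inv_mem _ hv') hQ hQn),
            hC.ev_units_inv (hord hv' hQ hQn), huv,
            mul_inv_cancel_right₀ (hC.ev_ne_zero (hord hv' hQ hQn))]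
        · rw [DFinsupp.single_eq_of_ne (Ne.symm hQP)]
          exact hC.tame_symbol_eq_zero hT (hord hw hQ hQn)
            (by rw [hordπ hQ (by omega), Finsupp.single_eq_of_ne (Ne.symm hQP)])
    · refine ⟨0, AddSubgroup.zero_mem _, fun Q hQ hQn => ?_⟩
      rw [DFinsupp.single_eq_of_ne, map_zero, DFinsupp.zero_apply]
      rintro rfl
      exact hP ⟨hQ, hQn⟩

end Tame

end IsProjCurve

/-- first isomorphism of Theorem `introker1`.  Let `C` be a regular,
irreducible curve, projective over `k`, with function field `F`, arithmetic genus `t`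
and a `k`-rational point `O`.  For every `d ≥ 3t + 1` the tame symbol induces an
isomorphism `F_d / F_{d-1} ≅ ∐_{O ≠ P ∈ C_d} k(P)^*`; this is expressed by saying
that the induced map `F_d → ∐_{O ≠ P ∈ C_d} k(P)^*` is surjective and has kernel
`F_{d-1}`. -/
theorem statement2 (k F : Type*) [Field k] [Field F] [Algebra k F]
    {Pt : Type*} (res : Pt → Type*) [∀ P, Field (res P)] [∀ P, Algebra k (res P)]
    (ord : Pt → F → ℤ) (ev : ∀ P, F → res P)
    (L : (Pt →₀ ℤ) → Submodule k F) (t : ℕ)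
    (hC : IsProjCurve k F res ord ev L t)
    (O : Pt) (hO : Module.finrank k (res O) = 1)
    (T : K2 F →+ Π₀ P : Pt, Additive ((res P)ˣ)) (hT : IsTameSymbol ord ev T)
    (d : ℕ) (hd : 3 * t + 1 ≤ d) :
    (∀ y : Π₀ P : Pt, Additive ((res P)ˣ),
      ∃ x ∈ Fsub k res ord d,
        ∀ P, P ≠ O → Module.finrank k (res P) = d → T x P = y P) ∧
    (∀ x ∈ Fsub k res ord d,
      ((∀ P, P ≠ O → Module.finrank k (res P) = d → T x P = 0) ↔
        x ∈ Fsub k res ord (d - 1))) := by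
  obtain ⟨n, rfl⟩ : ∃ n, d = n + 1 := ⟨d - 1, by omega⟩
  have hn : 3 * t ≤ n := by omega
  have hex : ∀ P, ∃ u : Fˣ, P ≠ O → Module.finrank k (res P) = n + 1 →
      IsProjCurve.IsVanishing L ord O P (n + 1 + t) u := fun P => by
    by_cases hP : P ≠ O ∧ Module.finrank k (res P) = n + 1
    · obtain ⟨u, hu⟩ := hC.exists_isVanishing hO hP.1
      exact ⟨u, fun _ h => by simpa [h] using hu⟩
    · exact ⟨1, fun h₁ h₂ => absurd ⟨h₁, h₂⟩ hP⟩
  choose π hπ using hex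
  refine ⟨hC.exists_mem_Fsub_tame_eq hO hT hn hπ, fun x hx => ⟨fun h =>
    hC.mem_Fsub_of_tame_eq_zero hO hT hn hπ hx h, fun h P _ hP =>
    hC.tame_eq_zero_of_mem_Fsub hT h ?_⟩⟩
  omega

end
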